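/- Let A have rank m (so A Aᵀ is invertible), ν = n − m, K a ν × n matrix whose rows form a basis of the null space of A, x̄ with A x̄ = b, and ρ > 0. Define U = {u ∈ ℝ^m : Aᵀ u ≤ 0 componentwise, bᵀ u = ρ} and V = {v ∈ ℝ^n : K v = 0, v ≥ 0 componentwise, −x̄ᵀ v = ρ}. Then the map u ↦ −Aᵀ u is a bijection from U onto V, whose inverse is v ↦ −(A Aᵀ)⁻¹ A v; in particular U is nonempty if and only if V is nonempty. -/

import Mathlib

open Matrix

/-!
`A Aᵀ` is invertible, so `(A Aᵀ)⁻¹ A` is a left inverse of `Aᵀ` and it suffices to identify the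
image of `U` under `u ↦ -Aᵀ u`. Since the rows of `K` span `ker A`, the kernel of `K` is the
orthogonal complement of `ker A`, which is the range of `Aᵀ`; hence every point of `V` has the form
`-Aᵀ u`. The remaining constraints match because `-x̄ᵀ(-Aᵀ u) = (A x̄)ᵀ u = bᵀ u`.
-/

section Orthogonality

variable {R m n ι : Type*} [Fintype n]

theorem mulVec_eq_zero_iff_forall_mem_span_row [Semiring R] {K : Matrix ι n R} {v : n → R} :
    K *ᵥ v = 0 ↔ ∀ x ∈ Submodule.span R (Set.range K.row), x ⬝ᵥ v = 0 := by
  have span_le_ker_iff : Submodule.span R (Set.range K.row) ≤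
      LinearMap.ker ((dotProductBilin R Rᵐᵒᵖ).flip v) ↔ ∀ i, K i ⬝ᵥ v = 0 := by
    rw [Submodule.span_le, Set.range_subset_iff]
    rfl
  exact funext_iff.trans span_le_ker_iff.symm

variable [Fintype m]

theorem exists_transpose_mulVec_eq_iff_forall_dotProduct_eq_zero [Field R]
    {A : Matrix m n R} {v : n → R} :
    (∃ u, Aᵀ *ᵥ u = v) ↔ ∀ x, A *ᵥ x = 0 → x ⬝ᵥ v = 0 := by
  classical
  constructor
  · rintro ⟨u, rfl⟩ x hx
    rw [dotProduct_mulVec, vecMul_transpose, hx, zero_dotProduct]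
  · intro hv
    have mem_range : dotProductEquiv R n v ∈ LinearMap.range A.mulVecLin.dualMap := by
      rw [LinearMap.range_dualMap_eq_dualAnnihilator_ker, Submodule.mem_dualAnnihilator]
      exact fun x hx => (dotProduct_comm v x).trans (hv x hx)
    obtain ⟨φ, hφ⟩ := mem_range
    obtain ⟨u, rfl⟩ := (dotProductEquiv R m).surjective φ
    refine ⟨u, dotProduct_eq _ _ fun x => ?_⟩
    rw [mulVec_transpose, ← dotProduct_mulVec]
    exact LinearMap.congr_fun hφ x

theorem mulVec_eq_zero_iff_exists_transpose_mulVec_eq [Field R]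
    {A : Matrix m n R} {K : Matrix ι n R}
    (hK : Submodule.span R (Set.range K.row) = LinearMap.ker A.mulVecLin) {v : n → R} :
    K *ᵥ v = 0 ↔ ∃ u, Aᵀ *ᵥ u = v := by
  rw [mulVec_eq_zero_iff_forall_mem_span_row, hK,
    exists_transpose_mulVec_eq_iff_forall_dotProduct_eq_zero]
  rfl

end Orthogonality

section Pseudoinverse

variable {R m n : Type*} [Fintype m] [DecidableEq m] [Fintype n]

theorem isUnit_of_rank_eq_card [Field R] {M : Matrix m m R} (hM : M.rank = Fintype.card m) :
    IsUnit M := by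
  rw [← mulVec_surjective_iff_isUnit]
  have range_eq_top : LinearMap.range M.mulVecLin = ⊤ :=
    Submodule.eq_top_of_finrank_eq (hM.trans (Module.finrank_fintype_fun_eq_card R).symm)
  exact LinearMap.range_eq_top.mp range_eq_top

theorem leftInverse_neg_pinv_neg_transpose [CommRing R] {A : Matrix m n R}
    (hA : IsUnit (A * Aᵀ)) :
    Function.LeftInverse (fun v => -(((A * Aᵀ)⁻¹ * A) *ᵥ v)) (fun u => -(Aᵀ *ᵥ u)) := by
  intro u
  have pinv_mul_transpose : (A * Aᵀ)⁻¹ * A * Aᵀ = 1 := by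
    rw [Matrix.mul_assoc, nonsing_inv_mul _ ((isUnit_iff_isUnit_det _).mp hA)]
  simp only [mulVec_neg, neg_neg, mulVec_mulVec, pinv_mul_transpose, one_mulVec]

end Pseudoinverse

section Certificates

variable {R m n ι : Type*} [Fintype m] [Fintype n]

/-- The set `U` of Farkas certificates, normalized to level `ρ`: for `0 < ρ`, a member witnesses
that `A x = b`, `0 ≤ x` has no solution. -/
def farkasCertificates [CommRing R] [PartialOrder R] (A : Matrix m n R) (b : m → R) (ρ : R) :
    Set (m → R) :=
  {u | Aᵀ *ᵥ u ≤ 0 ∧ b ⬝ᵥ u = ρ}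

/-- The set `V` of Farkas certificates for the parametric system `0 ≤ xbar + Kᵀ t`, normalized to
level `ρ`: for `0 < ρ`, a member witnesses that this system has no solution `t`. -/
def parametricFarkasCertificates [CommRing R] [PartialOrder R] (K : Matrix ι n R) (xbar : n → R)
    (ρ : R) : Set (n → R) :=
  {v | K *ᵥ v = 0 ∧ 0 ≤ v ∧ -(xbar ⬝ᵥ v) = ρ}

theorem neg_transpose_mulVec_mem_parametricFarkasCertificates_iff [CommRing R] [PartialOrder R]
    [IsOrderedAddMonoid R] {A : Matrix m n R} {K : Matrix ι n R} {xbar : n → R} {ρ : R} {u : m → R}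
    (hKu : K *ᵥ (Aᵀ *ᵥ u) = 0) :
    -(Aᵀ *ᵥ u) ∈ parametricFarkasCertificates K xbar ρ ↔
      u ∈ farkasCertificates A (A *ᵥ xbar) ρ := by
  have level_eq : -(xbar ⬝ᵥ -(Aᵀ *ᵥ u)) = (A *ᵥ xbar) ⬝ᵥ u := by
    rw [dotProduct_neg, neg_neg, dotProduct_mulVec, vecMul_transpose]
  simp only [parametricFarkasCertificates, farkasCertificates, Set.mem_ofPred_eq, level_eq,
    mulVec_neg, hKu, neg_zero, true_and, neg_nonneg]

variable [Field R]

theorem image_neg_transpose_farkasCertificates [PartialOrder R] [IsOrderedAddMonoid R]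
    {A : Matrix m n R} {K : Matrix ι n R}
    (hK : Submodule.span R (Set.range K.row) = LinearMap.ker A.mulVecLin) (xbar : n → R) (ρ : R) :
    (fun u => -(Aᵀ *ᵥ u)) '' farkasCertificates A (A *ᵥ xbar) ρ =
      parametricFarkasCertificates K xbar ρ := by
  have mem_iff (u : m → R) := neg_transpose_mulVec_mem_parametricFarkasCertificates_iff
    (xbar := xbar) (ρ := ρ) ((mulVec_eq_zero_iff_exists_transpose_mulVec_eq hK).mpr ⟨u, rfl⟩)
  refine Set.Subset.antisymm (Set.image_subset_iff.mpr fun u => (mem_iff u).mpr) fun v hv => ?_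
  obtain ⟨u, rfl⟩ := (mulVec_eq_zero_iff_exists_transpose_mulVec_eq hK).mp hv.1
  have neg_transpose_neg : -(Aᵀ *ᵥ -u) = Aᵀ *ᵥ u := by rw [mulVec_neg, neg_neg]
  exact ⟨-u, (mem_iff (-u)).mp (neg_transpose_neg ▸ hv), neg_transpose_neg⟩

theorem bijOn_U_V_general [DecidableEq m] [LinearOrder R] [IsStrictOrderedRing R]
    {A : Matrix m n R} (hrank : A.rank = Fintype.card m) {K : Matrix ι n R}
    (hK : Submodule.span R (Set.range K.row) = LinearMap.ker A.mulVecLin)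
    {b : m → R} {xbar : n → R} (hxbar : A *ᵥ xbar = b) (ρ : R) :
    Set.BijOn (fun u => -(Aᵀ *ᵥ u))
      (farkasCertificates A b ρ) (parametricFarkasCertificates K xbar ρ) ∧
    Set.InvOn (fun v => -(((A * Aᵀ)⁻¹ * A) *ᵥ v)) (fun u => -(Aᵀ *ᵥ u))
      (farkasCertificates A b ρ) (parametricFarkasCertificates K xbar ρ) ∧
    ((farkasCertificates A b ρ).Nonempty ↔ (parametricFarkasCertificates K xbar ρ).Nonempty) := by
  subst hxbar
  have isUnit_gram : IsUnit (A * Aᵀ) :=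
    isUnit_of_rank_eq_card ((rank_self_mul_transpose A).trans hrank)
  have leftInverse := leftInverse_neg_pinv_neg_transpose isUnit_gram
  rw [← image_neg_transpose_farkasCertificates hK xbar ρ]
  exact ⟨leftInverse.injective.bijOn_image,
    ⟨leftInverse.leftInvOn _, (leftInverse.leftInvOn _).rightInvOn_image⟩,
    Set.image_nonempty.symm⟩

end Certificates

/-- With `U = {u : Aᵀ u ≤ 0, bᵀ u = ρ}` and
`V = {v : K v = 0, v ≥ 0, −x̄ᵀ v = ρ}`, the map `u ↦ −Aᵀ u` is a bijection from
`U` onto `V` with inverse `v ↦ −(A Aᵀ)⁻¹ A v`; in particular `U` is nonempty iff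
`V` is nonempty. -/
theorem bijOn_U_V (m n ν : ℕ) (hmn : m ≤ n) (hν : ν = n - m)
    (A : Matrix (Fin m) (Fin n) ℝ) (hrank : A.rank = m)
    (b : Fin m → ℝ) (hb : b ≠ 0) (ρ : ℝ) (hρ : 0 < ρ)
    (K : Matrix (Fin ν) (Fin n) ℝ)
    (hKind : LinearIndependent ℝ (fun i => K i))
    (hKspan : Submodule.span ℝ (Set.range (fun i => K i)) = LinearMap.ker A.mulVecLin)
    (xbar : Fin n → ℝ) (hxbar : A.mulVec xbar = b) :
    Set.BijOn (fun u : Fin m → ℝ => -(Aᵀ.mulVec u))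
      {u : Fin m → ℝ | Aᵀ.mulVec u ≤ 0 ∧ b ⬝ᵥ u = ρ}
      {v : Fin n → ℝ | K.mulVec v = 0 ∧ 0 ≤ v ∧ -(xbar ⬝ᵥ v) = ρ} ∧
    Set.InvOn (fun v : Fin n → ℝ => -((A * Aᵀ)⁻¹ * A).mulVec v)
      (fun u : Fin m → ℝ => -(Aᵀ.mulVec u))
      {u : Fin m → ℝ | Aᵀ.mulVec u ≤ 0 ∧ b ⬝ᵥ u = ρ}
      {v : Fin n → ℝ | K.mulVec v = 0 ∧ 0 ≤ v ∧ -(xbar ⬝ᵥ v) = ρ} ∧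
    ((∃ u : Fin m → ℝ, Aᵀ.mulVec u ≤ 0 ∧ b ⬝ᵥ u = ρ) ↔
      (∃ v : Fin n → ℝ, K.mulVec v = 0 ∧ 0 ≤ v ∧ -(xbar ⬝ᵥ v) = ρ)) :=
  bijOn_U_V_general (hrank.trans (Fintype.card_fin m).symm) hKspan hxbar ρ
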